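/- Let n and d be positive integers with d ≤ n, and let A = (a_{ij}) be a d × n integer matrix of rank d. In the polynomial ring ℂ[z₁,…,zₙ,w₁,…,wₙ], let I be the ideal generated by the d polynomials f_i = Σ_{j=1}^n a_{ij} z_j w_j (1 ≤ i ≤ d). Then the Krull dimension of the quotient ring ℂ[z₁,…,zₙ,w₁,…,wₙ]/I equals 2n − d. -/

import Mathlib

open MvPolynomial

theorem ringKrullDim_le_of_isIntegral {R S : Type*} [CommRing R] [CommRing S] [Algebra R S]
    [Algebra.IsIntegral R S] : ringKrullDim S ≤ ringKrullDim R :=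
  Order.krullDim_le_of_strictMono (PrimeSpectrum.comap (algebraMap R S)) fun _ _ h ↦
    Ideal.IsIntegral.comap_lt_comap h

theorem ringKrullDim_eq_of_isIntegral_of_injective {R S : Type*} [CommRing R] [CommRing S]
    [Algebra R S] [Algebra.IsIntegral R S] (hinj : Function.Injective (algebraMap R S)) :
    ringKrullDim S = ringKrullDim R := by
  refine le_antisymm ringKrullDim_le_of_isIntegral (iSup_le fun l ↦ ?_)
  obtain ⟨Q, -, hQ, hQl⟩ := Ideal.exists_ideal_over_prime_of_isIntegral (S := S)
    l.head.asIdeal ⊥ (by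
      rw [← RingHom.ker_eq_comap_bot, (RingHom.injective_iff_ker_eq_bot _).mp hinj]
      exact bot_le)
  have : Q.LiesOver l.head.asIdeal := ⟨hQl.symm⟩
  obtain ⟨L, hL, -⟩ := Ideal.exists_ltSeries_of_hasGoingUp l Q
  exact hL ▸ le_iSup (fun p : LTSeries (PrimeSpectrum S) ↦ (p.length : WithBot ℕ∞)) L

theorem RingHom.IsIntegral.ringKrullDim_eq_of_injective {R S : Type*} [CommRing R] [CommRing S]
    {f : R →+* S} (hf : f.IsIntegral) (hinj : Function.Injective f) :
    ringKrullDim S = ringKrullDim R := by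
  algebraize [f]
  exact ringKrullDim_eq_of_isIntegral_of_injective hinj

/-- An integral ring homomorphism from a finite-dimensional domain is injective as soon as it
preserves the Krull dimension. -/
theorem RingHom.IsIntegral.injective_of_ringKrullDim_eq {R S : Type*} [CommRing R] [IsDomain R]
    [FiniteRingKrullDim R] [CommRing S] {f : R →+* S} (hf : f.IsIntegral)
    (hdim : ringKrullDim R ≤ ringKrullDim S) : Function.Injective f := by
  rw [injective_iff_map_eq_zero]
  intro r hr
  by_contra hr0
  have hintegral : f.kerLift.IsIntegral := by
    refine RingHom.IsIntegral.tower_top (Ideal.Quotient.mk (RingHom.ker f)) _ ?_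
    exact hf
  have h1 := ringKrullDim_succ_le_of_surjective (Ideal.Quotient.mk (RingHom.ker f))
    Ideal.Quotient.mk_surjective (mem_nonZeroDivisors_of_ne_zero hr0)
    (Ideal.Quotient.eq_zero_iff_mem.mpr hr)
  rw [← hintegral.ringKrullDim_eq_of_injective f.kerLift_injective] at h1
  have h2 := (add_le_add_left hdim 1).trans h1
  obtain ⟨m, hm⟩ : ∃ m : ℕ, ringKrullDim R = m := by
    have h3 := ringKrullDim_ne_top (R := R)
    have h4 := ringKrullDim_ne_bot (R := R)
    generalize ringKrullDim R = x at h3 h4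
    induction x with
    | bot => exact absurd rfl h4
    | coe x =>
      induction x with
      | top => exact absurd rfl h3
      | coe x => exact ⟨x, rfl⟩
  rw [hm] at h2
  norm_cast at h2
  omega

/-- If a ring is integral over a polynomial subring, then killing some of the variables leaves the
dimension of the polynomial ring in the remaining ones. -/
theorem ringKrullDim_quotient_span_range_X {k R σ τ : Type*} [Field k] [CommRing R]
    {φ : MvPolynomial (σ ⊕ τ) k →+* R} (hφ : φ.IsIntegral) (hinj : Function.Injective φ) :
    ringKrullDim (R ⧸ Ideal.span (Set.range fun i ↦ φ (X (Sum.inl i)))) =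
      ringKrullDim (MvPolynomial τ k) := by
  set I := Ideal.span (Set.range fun i ↦ φ (X (Sum.inl i))) with hI
  let π : MvPolynomial (σ ⊕ τ) k →+* MvPolynomial τ k :=
    (aeval (Sum.elim 0 X) : MvPolynomial (σ ⊕ τ) k →ₐ[k] MvPolynomial τ k).toRingHom
  let ι : MvPolynomial τ k →+* MvPolynomial (σ ⊕ τ) k := (rename Sum.inr).toRingHom
  have hπι (p) : π (ι p) = p := by
    have : (aeval (Sum.elim (0 : σ → MvPolynomial τ k) X)).comp (rename Sum.inr) =
        AlgHom.id k (MvPolynomial τ k) := by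
      ext i; simp
    exact DFunLike.congr_fun this p
  let ψ : MvPolynomial τ k →+* R ⧸ I := (Ideal.Quotient.mk I).comp (φ.comp ι)
  have hcomp : ψ.comp π = (Ideal.Quotient.mk I).comp φ := by
    refine MvPolynomial.ringHom_ext (fun c ↦ by simp [ψ, π, ι]) ?_
    rintro (i | i)
    · have : (Ideal.Quotient.mk I) (φ (X (Sum.inl i))) = 0 :=
        Ideal.Quotient.eq_zero_iff_mem.mpr (Ideal.subset_span ⟨i, rfl⟩)
      simp [π, this]
    · simp [ψ, π, ι]
  refine RingHom.IsIntegral.ringKrullDim_eq_of_injective (f := ψ) ?_ ?_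
  · refine RingHom.IsIntegral.tower_top π ψ ?_
    rw [hcomp]
    exact hφ.trans _ _ (RingHom.isIntegral_of_surjective _ Ideal.Quotient.mk_surjective)
  · rw [injective_iff_map_eq_zero]
    intro p hp
    algebraize [φ]
    have : (RingHom.ker π).IsPrime := RingHom.ker_isPrime π
    obtain ⟨Q, -, hQ, hQπ⟩ := Ideal.exists_ideal_over_prime_of_isIntegral (S := R)
      (RingHom.ker π) ⊥ (by
        rw [← RingHom.ker_eq_comap_bot]
        exact ((RingHom.injective_iff_ker_eq_bot _).mp hinj).trans_le bot_le)
    have hIQ : I ≤ Q := by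
      rw [hI, Ideal.span_le]
      rintro _ ⟨i, rfl⟩
      have : (X (Sum.inl i) : MvPolynomial (σ ⊕ τ) k) ∈ RingHom.ker π := by
        simp [RingHom.mem_ker, π]
      rwa [← hQπ] at this
    have : ι p ∈ RingHom.ker π := by
      rw [← hQπ]
      exact hIQ (Ideal.Quotient.eq_zero_iff_mem.mp hp)
    rw [← hπι p]
    exact this

open scoped Matrix in
theorem Matrix.linearIndependent_row_map_of_rank_eq {m n K L : Type*} [Fintype m] [Fintype n]
    [Field K] [Field L] (f : K →+* L) (A : Matrix m n K) (h : A.rank = Fintype.card m) :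
    LinearIndependent L (A.map f).row := by
  classical
  have hsurj : Function.Surjective A.mulVec := by
    have : A.mulVecLin.range = ⊤ := Submodule.eq_top_of_finrank_eq (by simpa [Matrix.rank] using h)
    exact LinearMap.range_eq_top.mp this
  obtain ⟨B, hB⟩ := Matrix.mulVec_surjective_iff_exists_right_inverse.mp hsurj
  have hB' : A.map f * B.map f = 1 := by
    rw [← Matrix.map_mul, hB]
    simp
  rw [← Matrix.vecMul_injective_iff]
  refine Function.LeftInverse.injective (g := fun v ↦ v ᵥ* B.map f) fun v ↦ ?_
  simp [hB']

theorem LinearIndependent.exists_basis_sum {ι K V : Type*} [DivisionRing K] [AddCommGroup V]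
    [Module K V] {v : ι → V} (hv : LinearIndependent K v) :
    ∃ (s : Set V) (b : Module.Basis (ι ⊕ s) K V), ∀ i, b (Sum.inl i) = v i :=
  ⟨_, Module.Basis.sumExtend hv, fun i ↦ by
    simp only [Module.Basis.sumExtend, Module.Basis.reindex_apply, Module.Basis.extend_apply_self]
    rfl⟩

/-- A polynomial ring in variables `zⱼ, wⱼ` is integral over any subring containing the constants
and the elements `zⱼ - wⱼ` and `zⱼ wⱼ`. -/
theorem MvPolynomial.isIntegral_of_mem_range_sub_of_mem_range_mul {k S σ : Type*} [CommRing k]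
    [CommRing S] {φ : S →+* MvPolynomial (σ ⊕ σ) k} (hC : ∀ c, C c ∈ φ.range)
    (hsub : ∀ j, X (Sum.inl j) - X (Sum.inr j) ∈ φ.range)
    (hmul : ∀ j, X (Sum.inl j) * X (Sum.inr j) ∈ φ.range) : φ.IsIntegral := by
  have hz (j : σ) : φ.IsIntegralElem (X (Sum.inl j)) := by
    obtain ⟨a, ha⟩ := hsub j
    obtain ⟨b, hb⟩ := hmul j
    refine ⟨Polynomial.X ^ 2 + (Polynomial.C (-a) * Polynomial.X + Polynomial.C (-b)),
      Polynomial.monic_X_pow_add (lt_of_le_of_lt Polynomial.degree_linear_le (by norm_num)), ?_⟩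
    rw [Polynomial.eval₂_add, Polynomial.eval₂_add, Polynomial.eval₂_mul, Polynomial.eval₂_pow,
      Polynomial.eval₂_X, Polynomial.eval₂_C, Polynomial.eval₂_C, map_neg, map_neg, ha, hb]
    ring
  intro p
  induction p using MvPolynomial.induction_on with
  | C c =>
    obtain ⟨s, hs⟩ := hC c
    exact hs ▸ φ.isIntegralElem_map
  | add p q hp hq => exact hp.add φ hq
  | mul_X p i hp =>
    refine hp.mul φ ?_
    obtain j | j := i
    · exact hz j
    · obtain ⟨a, ha⟩ := hsub j
      have : (X (Sum.inr j) : MvPolynomial (σ ⊕ σ) k) = X (Sum.inl j) - φ a := by rw [ha]; ring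
      rw [this]
      exact (hz j).sub φ φ.isIntegralElem_map

/-- **Lemma 1.** For a `d × n` integer matrix `A` of rank `d` (over `ℚ`), the quotient of
`ℂ[z₁,…,zₙ,w₁,…,wₙ]` by the ideal generated by the `d` polynomials
`fᵢ = Σⱼ aᵢⱼ zⱼ wⱼ` has Krull dimension `2n - d`. -/
theorem stmt_0 (n d : ℕ) (hd : 0 < d) (hdn : d ≤ n)
    (A : Matrix (Fin d) (Fin n) ℤ)
    (hrank : (A.map (Int.cast : ℤ → ℚ)).rank = d)
    (I : Ideal (MvPolynomial (Fin n ⊕ Fin n) ℂ))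
    (hI : I = Ideal.span (Set.range fun i : Fin d =>
      ∑ j : Fin n, (A i j : MvPolynomial (Fin n ⊕ Fin n) ℂ) *
        X (Sum.inl j) * X (Sum.inr j))) :
    ringKrullDim (MvPolynomial (Fin n ⊕ Fin n) ℂ ⧸ I) = ((2 * n - d : ℕ) : WithBot ℕ∞) := by
  subst hI
  have hli := Matrix.linearIndependent_row_map_of_rank_eq (algebraMap ℚ ℂ)
    (A.map (Int.cast : ℤ → ℚ)) (by simpa using hrank)
  obtain ⟨ι, b, hbA⟩ := hli.exists_basis_sum
  have : Finite (Fin d ⊕ ι) := Module.Finite.finite_basis b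
  have : Finite ι := Finite.sum_right (Fin d)
  have := Fintype.ofFinite ι
  have hcard : d + Nat.card ι = n := by
    have := Module.finrank_eq_nat_card_basis b
    simpa [Nat.card_sum] using this.symm
  have hb (i : Fin d) (j : Fin n) : b (Sum.inl i) j = (A i j : ℂ) := by
    simp [hbA]
  let P (v : Fin n → ℂ) : MvPolynomial (Fin n ⊕ Fin n) ℂ :=
    ∑ j, C (v j) * (X (Sum.inl j) * X (Sum.inr j))
  let φ : MvPolynomial (Fin d ⊕ (ι ⊕ Fin n)) ℂ →ₐ[ℂ] MvPolynomial (Fin n ⊕ Fin n) ℂ :=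
    aeval (Sum.elim (fun i ↦ P (b (Sum.inl i)))
      (Sum.elim (fun i ↦ P (b (Sum.inr i))) fun j ↦ X (Sum.inl j) - X (Sum.inr j)))
  have hPb (i : Fin d ⊕ ι) : P (b i) ∈ φ.range := by
    obtain i | i := i
    · exact ⟨X (Sum.inl i), by simp [φ]⟩
    · exact ⟨X (Sum.inr (Sum.inl i)), by simp [φ]⟩
  have hP (v : Fin n → ℂ) : P v ∈ φ.range := by
    have : P v = ∑ i, C (b.repr v i) * P (b i) := by
      conv_lhs => rw [← b.sum_repr v]
      simp only [P, Finset.sum_apply, Pi.smul_apply, smul_eq_mul, map_sum, map_mul,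
        Finset.sum_mul, Finset.mul_sum]
      rw [Finset.sum_comm]
      simp only [mul_assoc]
    rw [this]
    exact sum_mem fun i _ ↦ mul_mem (φ.range.algebraMap_mem _) (hPb i)
  have hintegral : φ.toRingHom.IsIntegral := by
    refine isIntegral_of_mem_range_sub_of_mem_range_mul (fun c ↦ φ.range.algebraMap_mem c)
      (fun j ↦ ⟨X (Sum.inr (Sum.inr j)), by simp [φ]⟩) fun j ↦ ?_
    have : P (Pi.single j 1) = X (Sum.inl j) * X (Sum.inr j) := by
      simp [P, Pi.single_apply]
    exact this ▸ hP (Pi.single j 1)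
  have hdim {σ : Type} [Finite σ] :
      ringKrullDim (MvPolynomial σ ℂ) = ((Nat.card σ : ℕ) : WithBot ℕ∞) := by simp
  have hinj : Function.Injective φ.toRingHom := by
    have : FiniteRingKrullDim (MvPolynomial (Fin d ⊕ (ι ⊕ Fin n)) ℂ) := by
      rw [finiteRingKrullDim_iff_ne_bot_and_top, hdim]
      exact ⟨WithBot.coe_ne_bot, fun h ↦ ENat.natCast_ne_top _ (WithBot.coe_injective h)⟩
    refine hintegral.injective_of_ringKrullDim_eq ?_
    rw [hdim, hdim, Nat.card_sum, Nat.card_sum, Nat.card_sum, Nat.card_fin, Nat.card_fin,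
      ← add_assoc, hcard]
  have hφX (i : Fin d) : φ.toRingHom (X (Sum.inl i)) = ∑ j : Fin n,
      (A i j : MvPolynomial (Fin n ⊕ Fin n) ℂ) * X (Sum.inl j) * X (Sum.inr j) := by
    simp [φ, P, hb, mul_assoc]
  rw [← funext hφX, ringKrullDim_quotient_span_range_X hintegral hinj, hdim, Nat.card_sum, Nat.card_fin]
  congr 2
  omega
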